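/- In the root system of type D_ℓ with ℓ even, (ω_ℓ, ω_ℓ, 0) and (ω_{ℓ−1}, ω_{ℓ−1}, 0) and (ω₁, ω₁, 0) are low triples, while (ω_{ℓ−1}, ω_ℓ, ν) is never a low triple for any dominant ν; with ℓ odd, (ω_{ℓ−1}, ω_ℓ, 0) and (ω₁, ω₁, 0) are low triples while (ω_ℓ, ω_ℓ, ν) is never a low triple. This matches duality: −w₀ω_ℓ = ω_ℓ for ℓ even and −w₀ω_ℓ = ω_{ℓ−1} for ℓ odd. -/

import Mathlib

open scoped RealInnerProductSpace

noncomputable section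

variable {E : Type*} [NormedAddCommGroup E] [InnerProductSpace ℝ E]

/-- The pairing `⟨x, α∨⟩ = 2(x,α)/(α,α)`. -/
def cpair (x α : E) : ℝ := 2 * ⟪x, α⟫ / ⟪α, α⟫

/-- Reflection in the hyperplane orthogonal to `α`. -/
def wrefl (α x : E) : E := x - cpair x α • α

/-- An irreducible reduced root system with a chosen base `simple : Fin ℓ → E`. -/
structure RootSystemData (ℓ : ℕ) (E : Type*) [NormedAddCommGroup E]
    [InnerProductSpace ℝ E] where
  roots : Finset E
  simple : Fin ℓ → E
  simple_mem : ∀ i, simple i ∈ roots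
  root_ne_zero : ∀ α ∈ roots, α ≠ 0
  reduced : ∀ α ∈ roots, (2 : ℝ) • α ∉ roots
  cpair_int : ∀ α ∈ roots, ∀ β ∈ roots, ∃ n : ℤ, cpair β α = (n : ℝ)
  reflect_mem : ∀ α ∈ roots, ∀ β ∈ roots, wrefl α β ∈ roots
  simple_indep : LinearIndependent ℝ simple
  root_decomp : ∀ α ∈ roots,
    (∃ c : Fin ℓ → ℕ, α = ∑ i, (c i : ℝ) • simple i) ∨
    (∃ c : Fin ℓ → ℕ, α = -∑ i, (c i : ℝ) • simple i)
  irred : ∀ S : Finset (Fin ℓ), S.Nonempty →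
    (∀ i ∈ S, ∀ j ∉ S, ⟪simple i, simple j⟫ = 0) → S = Finset.univ

namespace RootSystemData

variable {ℓ : ℕ} (R : RootSystemData ℓ E)

/-- Integral weights. -/
def IsIntegral (x : E) : Prop := ∀ α ∈ R.roots, ∃ n : ℤ, cpair x α = (n : ℝ)

/-- Dominant (integral) weights. -/
def IsDominant (x : E) : Prop :=
  R.IsIntegral x ∧ ∀ i, 0 ≤ cpair x (R.simple i)

/-- The dominant order: `R.wle μ λ` means `μ ≤ λ`, i.e. `λ - μ` is a nonnegative
integer combination of the simple roots. -/
def wle (μ lam : E) : Prop :=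
  ∃ c : Fin ℓ → ℕ, lam - μ = ∑ i, (c i : ℝ) • R.simple i

/-- Minuscule weights: nonzero dominant weights all of whose pairings with roots
lie in `{0, 1, -1}`. -/
def IsMinuscule (x : E) : Prop :=
  R.IsDominant x ∧ x ≠ 0 ∧
  ∀ α ∈ R.roots, cpair x α = 0 ∨ cpair x α = 1 ∨ cpair x α = -1

/-- `y` lies in the Weyl group orbit of `x`. -/
def InWeylOrbit (x y : E) : Prop :=
  ∃ l : List E, (∀ α ∈ l, α ∈ R.roots) ∧ y = l.foldr wrefl x

/-- `R.IsDualOf μ λ` expresses `μ = -w₀ λ`: `μ` is the dominant element of the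
Weyl orbit of `-λ`. -/
def IsDualOf (μ lam : E) : Prop := R.IsDominant μ ∧ R.InWeylOrbit (-lam) μ

/-- Low triples of dominant weights. -/
def LowTriple (lam mu nu : E) : Prop :=
  R.IsDominant lam ∧ R.IsDominant mu ∧ R.IsDominant nu ∧
  (∀ lam' mu' : E, R.IsDominant lam' → R.IsDominant mu' →
    R.wle lam' lam → R.wle mu' mu → R.wle nu (lam' + mu') → lam' = lam ∧ mu' = mu) ∧
  R.wle (nu + ∑ i, R.simple i) (lam + mu)

/-- Covering relation in the poset of dominant weights. -/
def Covers (lam mu : E) : Prop :=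
  R.IsDominant lam ∧ R.IsDominant mu ∧ R.wle mu lam ∧ mu ≠ lam ∧
  ∀ η, R.IsDominant η → R.wle mu η → R.wle η lam → η = mu ∨ η = lam

/-- A root of the subsystem `Φ_I` generated by the simple roots indexed by `I`. -/
def IsRootOf (I : Finset (Fin ℓ)) (β : E) : Prop :=
  β ∈ R.roots ∧ ∃ c : Fin ℓ → ℤ, (∀ i, c i ≠ 0 → i ∈ I) ∧
    β = ∑ i, (c i : ℝ) • R.simple i

/-- A short root of `Φ_I`. -/
def IsShortRootOf (I : Finset (Fin ℓ)) (β : E) : Prop :=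
  R.IsRootOf I β ∧ ∀ γ, R.IsRootOf I γ → ⟪β, β⟫ ≤ ⟪γ, γ⟫

/-- `θ` is the highest short root of `Φ_I`. -/
def IsHighestShortRoot (I : Finset (Fin ℓ)) (θ : E) : Prop :=
  R.IsShortRootOf I θ ∧ ∀ γ, R.IsShortRootOf I γ → R.wle γ θ

/-- `I` indexes a connected (i.e. irreducible) subdiagram of the Dynkin diagram. -/
def Connected (I : Finset (Fin ℓ)) : Prop :=
  I.Nonempty ∧ ∀ S ⊆ I, S.Nonempty →
    (∀ i ∈ S, ∀ j ∈ I, j ∉ S → ⟪R.simple i, R.simple j⟫ = 0) → S = I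

/-- `I` is of type A: the Cartan matrix of `Φ_I` is that of a type `A` chain. -/
def IsTypeASub (I : Finset (Fin ℓ)) : Prop :=
  ∃ e : Fin I.card ≃ {i // i ∈ I}, ∀ a b : Fin I.card,
    cpair (R.simple (e b).1) (R.simple (e a).1) =
      if a = b then 2
      else if (a : ℕ) + 1 = (b : ℕ) ∨ (b : ℕ) + 1 = (a : ℕ) then -1 else 0

/-- The subdiagram indexed by `I` is simply laced. -/
def SimplyLaced (I : Finset (Fin ℓ)) : Prop :=
  ∀ i ∈ I, ∀ j ∈ I, i ≠ j →
    cpair (R.simple i) (R.simple j) = 0 ∨ cpair (R.simple i) (R.simple j) = -1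

end RootSystemData

variable {ℓ : ℕ}

/-- `R` is of type D_ℓ (Bourbaki numbering): Cartan entries `⟨α_j, α_i∨⟩`. -/
def RootSystemData.IsTypeD (R : RootSystemData ℓ E) : Prop :=
  ∀ i j : Fin ℓ, cpair (R.simple j) (R.simple i) =
    if i = j then 2
    else if ((i : ℕ) + 1 = (j : ℕ) ∧ (j : ℕ) ≤ ℓ - 2) ∨
            ((j : ℕ) + 1 = (i : ℕ) ∧ (i : ℕ) ≤ ℓ - 2) ∨
            ((i : ℕ) = ℓ - 3 ∧ (j : ℕ) = ℓ - 1) ∨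
            ((j : ℕ) = ℓ - 3 ∧ (i : ℕ) = ℓ - 1) then -1 else 0

/-!
A minuscule weight is minimal among dominant weights: if `μ ≤ λ` with `λ` in the orbit of a
minuscule weight and `μ` dominant, simple reflections move `λ` down one simple root at a time until
it reaches `μ`, so the two have the same length. For a minuscule `λ` and its dual `λ* = -w₀λ`, the
sum `λ + λ*` is a nonzero dominant element of the root lattice `Q`, hence by irreducibility it
contains every simple root, and `(λ, λ*, 0)` is a low triple.

In Bourbaki coordinates for type D, the Weyl group contains all even sign changes, which gives the
duals of the minuscule weights, and the coordinate sum is even on `Q`. If `(λ, μ, ν)` is a low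
triple of half-spin weights, then `ν ≤ λ + μ - ∑ α_i`, whose `ε₁`-coordinate is at most `0`; pairing
with `ω₁ = ε₁` then forces `ν = 0`, so `λ + μ ∈ Q`. In the two excluded cases the coordinate sum of
`λ + μ` is odd.
-/

/-! ### Coroot pairings and reflections -/

lemma cpair_add_left (x y α : E) : cpair (x + y) α = cpair x α + cpair y α := by
  rw [cpair, inner_add_left, mul_add, add_div, cpair, cpair]

lemma cpair_neg_left (x α : E) : cpair (-x) α = -cpair x α := by
  rw [cpair, inner_neg_left, mul_neg, neg_div, cpair]

lemma cpair_smul_left (r : ℝ) (x α : E) : cpair (r • x) α = r * cpair x α := by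
  rw [cpair, real_inner_smul_left, mul_left_comm, mul_div_assoc, cpair]

lemma cpair_mul_inner_self {α : E} (hα : α ≠ 0) (x : E) :
    cpair x α * ⟪α, α⟫ = 2 * ⟪x, α⟫ :=
  div_mul_cancel₀ _ (inner_self_ne_zero.2 hα)

lemma cpair_pos_iff {α : E} (hα : α ≠ 0) (x : E) : 0 < cpair x α ↔ 0 < ⟪x, α⟫ := by
  rw [cpair, div_pos_iff_of_pos_right (real_inner_self_pos.2 hα), mul_pos_iff_of_pos_left two_pos]

lemma cpair_nonneg_iff {α : E} (hα : α ≠ 0) (x : E) : 0 ≤ cpair x α ↔ 0 ≤ ⟪x, α⟫ := by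
  rw [cpair, le_div_iff₀ (real_inner_self_pos.2 hα), zero_mul, mul_nonneg_iff_of_pos_left two_pos]

lemma wrefl_eq_reflection (α x : E) : wrefl α x = (ℝ ∙ α)ᗮ.reflection x := by
  rw [Submodule.reflection_orthogonal_apply, Submodule.reflection_singleton_apply, wrefl, cpair,
    real_inner_comm, real_inner_self_eq_norm_sq, RCLike.ofReal_real_eq_id, id, mul_div_assoc]
  module

lemma wrefl_wrefl (α x : E) : wrefl α (wrefl α x) = x := by
  simp only [wrefl_eq_reflection, Submodule.reflection_reflection]

lemma wrefl_neg (α x : E) : wrefl α (-x) = -wrefl α x := by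
  simp only [wrefl_eq_reflection, map_neg]

lemma wrefl_self (α : E) : wrefl α α = -α := by
  rw [wrefl_eq_reflection, Submodule.reflection_orthogonalComplement_singleton_eq_neg]

lemma inner_wrefl_wrefl (α x y : E) : ⟪wrefl α x, wrefl α y⟫ = ⟪x, y⟫ := by
  simp only [wrefl_eq_reflection, LinearIsometryEquiv.inner_map_map]

lemma cpair_wrefl_right (α x β : E) : cpair x (wrefl α β) = cpair (wrefl α x) β := by
  rw [cpair, cpair, inner_wrefl_wrefl, ← inner_wrefl_wrefl α x, wrefl_wrefl]

lemma cpair_wrefl_left (α x β : E) :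
    cpair (wrefl α x) β = cpair x β - cpair x α * cpair α β := by
  rw [wrefl, sub_eq_add_neg, cpair_add_left, cpair_neg_left, cpair_smul_left, ← sub_eq_add_neg]

lemma wrefl_sub_add {u v w : E} (huv : ⟪u, v⟫ = 0) (hn : ⟪u, u⟫ = ⟪v, v⟫)
    (hv : v ≠ 0) (hw : ⟪u, w⟫ = ⟪v, w⟫) : wrefl (u - v) (v + w) = u + w := by
  have hpair : cpair (v + w) (u - v) = -1 := by
    have hv' : ⟪v, v⟫ ≠ 0 := inner_self_ne_zero.2 hv
    simp only [cpair, inner_add_left, inner_sub_left, inner_sub_right, real_inner_comm u v,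
      real_inner_comm u w, real_inner_comm v w, huv, hn, hw]
    field_simp [hv']
    ring
  rw [wrefl, hpair]
  module

lemma wrefl_add_wrefl_sub {u v : E} (huv : ⟪u, v⟫ = 0) (hn : ⟪u, u⟫ = ⟪v, v⟫) (x : E) :
    wrefl (u + v) (wrefl (u - v) x) = x - cpair x u • u - cpair x v • v := by
  have hsub : cpair x (u - v) = (cpair x u - cpair x v) / 2 := by
    simp only [cpair, inner_sub_left, inner_sub_right, real_inner_comm u v, huv, hn]
    field_simp
    ring
  have hadd : cpair x (u + v) = (cpair x u + cpair x v) / 2 := by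
    simp only [cpair, inner_add_left, inner_add_right, real_inner_comm u v, huv, hn]
    field_simp
    ring
  have horth : cpair (u - v) (u + v) = 0 := by
    simp only [cpair, inner_sub_left, inner_add_right, real_inner_comm u v, huv, hn]
    simp
  rw [wrefl, cpair_wrefl_left, horth, wrefl, hsub, hadd]
  module

namespace RootSystemData

/-! ### Roots, dominant weights and the Weyl group -/

section RootSystem

variable (R : RootSystemData ℓ E)

/-- The root lattice `Q`, spanned over `ℤ` by the simple roots. -/
def rootLattice : Submodule ℤ E := Submodule.span ℤ (Set.range R.simple)

/-- `x` is the fundamental weight `ω_i`. Membership in the real span of the roots is part of the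
definition because `E` may be larger than that span. -/
def IsFundamentalWeight (i : Fin ℓ) (x : E) : Prop :=
  x ∈ Submodule.span ℝ (Set.range R.simple) ∧
    ∀ j, cpair x (R.simple j) = if i = j then 1 else 0

/-- All pairings of `x` with roots lie in `{0, 1, -1}`. Unlike `IsMinuscule`, this is invariant
under the Weyl group and under negation. -/
def HasUnitPairings (x : E) : Prop :=
  ∀ α ∈ R.roots, cpair x α = 0 ∨ cpair x α = 1 ∨ cpair x α = -1

variable {R}

lemma simple_ne_zero (R : RootSystemData ℓ E) (i : Fin ℓ) : R.simple i ≠ 0 :=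
  R.root_ne_zero _ (R.simple_mem i)

lemma coeff_injective {c d : Fin ℓ → ℝ}
    (h : ∑ i, c i • R.simple i = ∑ i, d i • R.simple i) : c = d :=
  funext fun i ↦ (Fintype.linearIndependent_iffₛ.1 R.simple_indep) c d h i

lemma simple_eq_sum (i : Fin ℓ) :
    R.simple i = ∑ j, (Pi.single i 1 : Fin ℓ → ℝ) j • R.simple j := by
  simp [Pi.single_apply]

lemma mem_span_simple_of_mem_rootLattice {x : E} (hx : x ∈ R.rootLattice) :
    x ∈ Submodule.span ℝ (Set.range R.simple) :=
  Submodule.span_le_restrictScalars ℤ ℝ _ hx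

lemma mem_rootLattice_iff {x : E} :
    x ∈ R.rootLattice ↔ ∃ c : Fin ℓ → ℤ, x = ∑ i, (c i : ℝ) • R.simple i := by
  simp only [rootLattice, Submodule.mem_span_range_iff_exists_fun, Int.cast_smul_eq_zsmul, eq_comm]

lemma sum_natCast_smul_mem_rootLattice (c : Fin ℓ → ℕ) :
    ∑ i, (c i : ℝ) • R.simple i ∈ R.rootLattice :=
  mem_rootLattice_iff.2 ⟨fun i ↦ c i, by simp only [Int.cast_natCast]⟩

lemma mem_rootLattice_of_mem_roots {α : E} (hα : α ∈ R.roots) : α ∈ R.rootLattice := by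
  rcases R.root_decomp α hα with ⟨c, rfl⟩ | ⟨c, rfl⟩
  · exact sum_natCast_smul_mem_rootLattice c
  · exact neg_mem (sum_natCast_smul_mem_rootLattice c)

lemma eq_of_inner_simple_eq {x y : E} (hx : x ∈ Submodule.span ℝ (Set.range R.simple))
    (hy : y ∈ Submodule.span ℝ (Set.range R.simple))
    (h : ∀ i, ⟪x, R.simple i⟫ = ⟪y, R.simple i⟫) : x = y := by
  obtain ⟨c, hc⟩ := (Submodule.mem_span_range_iff_exists_fun ℝ).1 (sub_mem hx hy)
  have hself : ⟪x - y, x - y⟫ = 0 := by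
    nth_rewrite 2 [← hc]
    rw [inner_sum]
    exact Finset.sum_eq_zero fun i _ ↦ by
      rw [real_inner_smul_right, inner_sub_left, h i, sub_self, mul_zero]
  exact sub_eq_zero.1 (inner_self_eq_zero.1 hself)

lemma eq_of_cpair_simple_eq {x y : E} (hx : x ∈ Submodule.span ℝ (Set.range R.simple))
    (hy : y ∈ Submodule.span ℝ (Set.range R.simple))
    (h : ∀ i, cpair x (R.simple i) = cpair y (R.simple i)) : x = y :=
  eq_of_inner_simple_eq hx hy fun i ↦ by
    linear_combination (-1 / 2) * cpair_mul_inner_self (R.simple_ne_zero i) x +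
      (1 / 2) * cpair_mul_inner_self (R.simple_ne_zero i) y +
      (1 / 2) * ⟪R.simple i, R.simple i⟫ * h i

lemma IsDominant.inner_simple_nonneg {x : E} (hx : R.IsDominant x) (i : Fin ℓ) :
    0 ≤ ⟪x, R.simple i⟫ :=
  (cpair_nonneg_iff (R.simple_ne_zero i) x).1 (hx.2 i)

lemma IsDominant.add {x y : E} (hx : R.IsDominant x) (hy : R.IsDominant y) :
    R.IsDominant (x + y) := by
  refine ⟨fun α hα ↦ ?_, fun i ↦ by
    rw [cpair_add_left]
    exact add_nonneg (hx.2 i) (hy.2 i)⟩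
  obtain ⟨m, hm⟩ := hx.1 α hα
  obtain ⟨n, hn⟩ := hy.1 α hα
  exact ⟨m + n, by rw [cpair_add_left, hm, hn, Int.cast_add]⟩

lemma isDominant_zero : R.IsDominant 0 :=
  ⟨fun _ _ ↦ ⟨0, by simp [cpair]⟩, fun _ ↦ by simp [cpair]⟩

lemma exists_natCast_eq_of_coeff_pos {a : Fin ℓ → ℝ} (h : ∑ i, a i • R.simple i ∈ R.roots)
    {j : Fin ℓ} (hj : 0 < a j) : ∃ c : Fin ℓ → ℕ, ∀ i, a i = c i := by
  rcases R.root_decomp _ h with ⟨c, hc⟩ | ⟨c, hc⟩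
  · exact ⟨c, congrFun (coeff_injective hc)⟩
  · have hneg : a = fun i ↦ -(c i : ℝ) := coeff_injective (R := R) <| by
      simp only [neg_smul, Finset.sum_neg_distrib, hc]
    have : a j ≤ 0 := by simp [hneg]
    exact absurd hj this.not_gt

lemma wrefl_simple_sum (i : Fin ℓ) (a : Fin ℓ → ℝ) :
    wrefl (R.simple i) (∑ j, a j • R.simple j) =
      ∑ j, (a j - (Pi.single i (cpair (∑ j, a j • R.simple j) (R.simple i)) : Fin ℓ → ℝ) j) •
        R.simple j := by
  simp [wrefl, sub_smul, Finset.sum_sub_distrib, Pi.single_apply]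

lemma inner_simple_nonpos {i j : Fin ℓ} (hij : i ≠ j) : ⟪R.simple i, R.simple j⟫ ≤ 0 := by
  have hroot := R.reflect_mem _ (R.simple_mem j) _ (R.simple_mem i)
  rw [simple_eq_sum i, wrefl_simple_sum, ← simple_eq_sum i] at hroot
  obtain ⟨c, hc⟩ := exists_natCast_eq_of_coeff_pos (j := i) hroot (by simp [hij])
  have hcj := hc j
  rw [Pi.single_eq_of_ne hij.symm, Pi.single_eq_same, zero_sub] at hcj
  by_contra! hpos
  have := (cpair_pos_iff (R.simple_ne_zero j) _).2 hpos
  have : (0 : ℝ) ≤ c j := Nat.cast_nonneg _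
  linarith

lemma exists_coeff_pos_of_sum_ne_zero {c : Fin ℓ → ℕ} (h : ∑ i, (c i : ℝ) • R.simple i ≠ 0) :
    ∃ i, 0 < c i ∧ 0 < ⟪∑ j, (c j : ℝ) • R.simple j, R.simple i⟫ := by
  by_contra! hcon
  refine (real_inner_self_pos.2 h).not_ge ?_
  rw [inner_sum]
  refine Finset.sum_nonpos fun i _ ↦ ?_
  rw [real_inner_smul_right]
  rcases Nat.eq_zero_or_pos (c i) with hi | hi
  · rw [hi, Nat.cast_zero, zero_mul]
  · exact mul_nonpos_of_nonneg_of_nonpos (Nat.cast_nonneg _) (hcon i hi)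

lemma eq_one_of_natCast_smul_simple_mem {n : ℕ} {i : Fin ℓ}
    (h : (n : ℝ) • R.simple i ∈ R.roots) : n = 1 := by
  have hn : (n : ℝ) ≠ 0 := fun h0 ↦ R.root_ne_zero _ h (by rw [h0, zero_smul])
  obtain ⟨z, hz⟩ := R.cpair_int _ h _ (R.simple_mem i)
  have hmul : (n : ℝ) * z = 2 := by
    have hi : ⟪R.simple i, R.simple i⟫ ≠ 0 := inner_self_ne_zero.2 (R.simple_ne_zero i)
    rw [← hz, cpair, real_inner_smul_right, real_inner_smul_left, real_inner_smul_right]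
    field_simp
  have hdvd : n ∣ 2 := Int.natCast_dvd_natCast.1 ⟨z, by exact_mod_cast hmul.symm⟩
  rcases (Nat.dvd_prime Nat.prime_two).1 hdvd with rfl | rfl
  · rfl
  · exact absurd h (R.reduced _ (R.simple_mem i))

lemma exists_wrefl_simple_lt {c : Fin ℓ → ℕ} (h : ∑ i, (c i : ℝ) • R.simple i ∈ R.roots) :
    (∃ i, ∑ j, (c j : ℝ) • R.simple j = R.simple i) ∨
      ∃ i, ∃ d : Fin ℓ → ℕ, ∑ j, d j < ∑ j, c j ∧
        wrefl (R.simple i) (∑ j, (c j : ℝ) • R.simple j) = ∑ j, (d j : ℝ) • R.simple j := by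
  obtain ⟨i, -, hi⟩ := exists_coeff_pos_of_sum_ne_zero (R.root_ne_zero _ h)
  by_cases hsupp : ∀ j ≠ i, c j = 0
  · have hsum : ∑ j, (c j : ℝ) • R.simple j = (c i : ℝ) • R.simple i :=
      Finset.sum_eq_single i (fun j _ hj ↦ by simp [hsupp j hj]) (by simp)
    have hone := eq_one_of_natCast_smul_simple_mem (hsum ▸ h)
    exact .inl ⟨i, by rw [hsum, hone, Nat.cast_one, one_smul]⟩
  push Not at hsupp
  obtain ⟨j, hji, hj⟩ := hsupp
  have hpair := (cpair_pos_iff (R.simple_ne_zero i) _).2 hi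
  have hroot := R.reflect_mem _ (R.simple_mem i) _ h
  rw [wrefl_simple_sum] at hroot
  obtain ⟨d, hd⟩ := exists_natCast_eq_of_coeff_pos (j := j) hroot (by
    rw [Pi.single_eq_of_ne hji, sub_zero]
    exact_mod_cast Nat.pos_of_ne_zero hj)
  refine .inr ⟨i, d, Finset.sum_lt_sum (fun t _ ↦ ?_) ⟨i, Finset.mem_univ i, ?_⟩, ?_⟩
  · rcases eq_or_ne t i with rfl | ht
    · have := hd t
      rw [Pi.single_eq_same] at this
      exact_mod_cast (by linarith : (d t : ℝ) ≤ c t)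
    · have := hd t
      rw [Pi.single_eq_of_ne ht, sub_zero] at this
      exact_mod_cast this.ge
  · have := hd i
    rw [Pi.single_eq_same] at this
    exact_mod_cast (by linarith : (d i : ℝ) < c i)
  · rw [wrefl_simple_sum]
    simp only [hd]

lemma neg_mem_roots {α : E} (hα : α ∈ R.roots) : -α ∈ R.roots := by
  rw [← wrefl_self]
  exact R.reflect_mem α hα α hα

theorem root_induction {P : E → Prop} (simple : ∀ i, P (R.simple i))
    (wrefl_simple : ∀ i, ∀ β ∈ R.roots, P β → P (wrefl (R.simple i) β)) {α : E}
    (hα : α ∈ R.roots) : P α := by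
  have positive (n : ℕ) : ∀ c : Fin ℓ → ℕ, ∑ i, c i = n →
      ∑ i, (c i : ℝ) • R.simple i ∈ R.roots →
      P (∑ i, (c i : ℝ) • R.simple i) ∧ P (-∑ i, (c i : ℝ) • R.simple i) := by
    induction n using Nat.strong_induction_on with
    | _ n ih =>
    rintro c rfl hroot
    rcases exists_wrefl_simple_lt hroot with ⟨i, hi⟩ | ⟨i, d, hlt, hd⟩
    · rw [hi, ← wrefl_self]
      exact ⟨simple i, wrefl_simple i _ (R.simple_mem i) (simple i)⟩
    · have hdroot := R.reflect_mem _ (R.simple_mem i) _ hroot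
      rw [hd] at hdroot
      obtain ⟨hP, hPneg⟩ := ih _ hlt d rfl hdroot
      rw [← wrefl_wrefl (R.simple i) (∑ j, (c j : ℝ) • R.simple j), hd, ← wrefl_neg]
      exact ⟨wrefl_simple i _ hdroot hP, wrefl_simple i _ (neg_mem_roots hdroot) hPneg⟩
  rcases R.root_decomp α hα with ⟨c, rfl⟩ | ⟨c, rfl⟩
  · exact (positive _ c rfl hα).1
  · exact (positive _ c rfl (neg_neg (∑ i, (c i : ℝ) • R.simple i) ▸ neg_mem_roots hα)).2

lemma isIntegral_of_simple {x : E} (hx : ∀ i, ∃ n : ℤ, cpair x (R.simple i) = n) :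
    R.IsIntegral x := by
  refine fun α hα ↦ root_induction (P := fun β ↦ ∃ n : ℤ, cpair x β = n) hx
    (fun i β hβ ⟨n, hn⟩ ↦ ?_) hα
  obtain ⟨k, hk⟩ := hx i
  obtain ⟨l, hl⟩ := R.cpair_int β hβ _ (R.simple_mem i)
  exact ⟨n - k * l, by rw [cpair_wrefl_right, cpair_wrefl_left, hn, hk, hl]; push_cast; rfl⟩

lemma inner_self_root_eq {s : ℝ} (hs : ∀ i, ⟪R.simple i, R.simple i⟫ = s) {α : E}
    (hα : α ∈ R.roots) : ⟪α, α⟫ = s :=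
  root_induction (P := fun β ↦ ⟪β, β⟫ = s) hs (fun _ _ _ hβ ↦ by rw [inner_wrefl_wrefl, hβ]) hα

lemma inner_self_simple_eq
    (hsymm : ∀ i j, cpair (R.simple i) (R.simple j) = cpair (R.simple j) (R.simple i))
    (i j : Fin ℓ) : ⟪R.simple i, R.simple i⟫ = ⟪R.simple j, R.simple j⟫ := by
  classical
  have huniv := R.irred {k | ⟪R.simple k, R.simple k⟫ = ⟪R.simple j, R.simple j⟫} ⟨j, by simp⟩
    fun k hk l hl ↦ by
      simp only [Finset.mem_filter, Finset.mem_univ, true_and] at hk hl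
      by_contra hkl
      have hk' := cpair_mul_inner_self (R.simple_ne_zero k) (R.simple l)
      have hl' := cpair_mul_inner_self (R.simple_ne_zero l) (R.simple k)
      rw [real_inner_comm (R.simple k) (R.simple l), ← hl', hsymm l k] at hk'
      have hpair : cpair (R.simple k) (R.simple l) ≠ 0 := fun h0 ↦ by
        rw [h0, zero_mul] at hl'
        exact hkl (by linarith)
      exact hl ((mul_left_cancel₀ hpair hk').symm.trans hk)
  simpa using huniv.ge (Finset.mem_univ i)

lemma IsFundamentalWeight.isDominant {i : Fin ℓ} {x : E} (hx : R.IsFundamentalWeight i x) :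
    R.IsDominant x := by
  refine ⟨isIntegral_of_simple fun j ↦ ⟨if i = j then 1 else 0, ?_⟩, fun j ↦ ?_⟩
  · rw [hx.2 j]
    push_cast
    rfl
  · rw [hx.2 j]
    positivity

lemma IsFundamentalWeight.ne_zero {i : Fin ℓ} {x : E} (hx : R.IsFundamentalWeight i x) :
    x ≠ 0 := by
  rintro rfl
  simpa [cpair] using hx.2 i

lemma IsFundamentalWeight.unique {i : Fin ℓ} {x y : E} (hx : R.IsFundamentalWeight i x)
    (hy : R.IsFundamentalWeight i y) : x = y :=
  eq_of_cpair_simple_eq hx.1 hy.1 fun j ↦ (hx.2 j).trans (hy.2 j).symm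

lemma IsFundamentalWeight.two_mul_inner_sum {i : Fin ℓ} {x : E} (hx : R.IsFundamentalWeight i x)
    (c : Fin ℓ → ℝ) :
    2 * ⟪∑ j, c j • R.simple j, x⟫ = c i * ⟪R.simple i, R.simple i⟫ := by
  rw [sum_inner, Finset.mul_sum, Finset.sum_eq_single i]
  · rw [real_inner_smul_left, real_inner_comm, mul_left_comm,
      ← cpair_mul_inner_self (R.simple_ne_zero i), hx.2 i, if_pos rfl, one_mul]
  · intro j _ hji
    rw [real_inner_smul_left, real_inner_comm, mul_left_comm,
      ← cpair_mul_inner_self (R.simple_ne_zero j), hx.2 j, if_neg hji.symm, zero_mul, mul_zero]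
  · simp

lemma InWeylOrbit.refl (x : E) : R.InWeylOrbit x x :=
  ⟨[], by simp, rfl⟩

lemma InWeylOrbit.wrefl {x y α : E} (h : R.InWeylOrbit x y) (hα : α ∈ R.roots) :
    R.InWeylOrbit x (wrefl α y) := by
  obtain ⟨l, hl, rfl⟩ := h
  exact ⟨α :: l, List.forall_mem_cons.2 ⟨hα, hl⟩, rfl⟩

lemma InWeylOrbit.induction {P : E → Prop} (hP : ∀ α ∈ R.roots, ∀ x, P x → P (_root_.wrefl α x))
    {x y : E} (h : R.InWeylOrbit x y) (hx : P x) : P y := by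
  obtain ⟨l, hl, rfl⟩ := h
  induction l with
  | nil => exact hx
  | cons α l ih =>
    obtain ⟨hα, hl⟩ := List.forall_mem_cons.1 hl
    exact hP α hα _ (ih hl)

lemma HasUnitPairings.wrefl {x α : E} (hx : R.HasUnitPairings x) (hα : α ∈ R.roots) :
    R.HasUnitPairings (wrefl α x) := fun β hβ ↦ by
  rw [← cpair_wrefl_right]
  exact hx _ (R.reflect_mem α hα β hβ)

lemma HasUnitPairings.neg {x : E} (hx : R.HasUnitPairings x) : R.HasUnitPairings (-x) :=
  fun α hα ↦ by
    rw [cpair_neg_left, neg_eq_zero, neg_inj, neg_eq_iff_eq_neg, or_comm (a := cpair x α = -1)]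
    exact hx α hα

lemma IsIntegral.neg {x : E} (hx : R.IsIntegral x) : R.IsIntegral (-x) := fun α hα ↦ by
  obtain ⟨n, hn⟩ := hx α hα
  exact ⟨-n, by rw [cpair_neg_left, hn, Int.cast_neg]⟩

lemma IsIntegral.wrefl {x α : E} (hx : R.IsIntegral x) (hα : α ∈ R.roots) :
    R.IsIntegral (wrefl α x) := fun β hβ ↦ by
  rw [← cpair_wrefl_right]
  exact hx _ (R.reflect_mem α hα β hβ)

lemma InWeylOrbit.sub_mem_rootLattice {x y : E} (h : R.InWeylOrbit x y) (hx : R.IsIntegral x) :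
    y - x ∈ R.rootLattice := by
  have hind := h.induction (P := fun z ↦ R.IsIntegral z ∧ z - x ∈ R.rootLattice)
    fun α hα z ⟨hz, hzx⟩ ↦ ⟨hz.wrefl hα, by
      obtain ⟨n, hn⟩ := hz α hα
      rw [_root_.wrefl, hn, Int.cast_smul_eq_zsmul, sub_right_comm]
      exact sub_mem hzx (Submodule.smul_mem _ n (mem_rootLattice_of_mem_roots hα))⟩
  exact (hind ⟨hx, by rw [sub_self]; exact zero_mem _⟩).2

lemma exists_sum_sub_simple {c : Fin ℓ → ℕ} {i : Fin ℓ} (hi : 0 < c i) :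
    ∃ d : Fin ℓ → ℕ, ∑ j, d j + 1 = ∑ j, c j ∧
      ∑ j, (c j : ℝ) • R.simple j - R.simple i = ∑ j, (d j : ℝ) • R.simple j := by
  obtain ⟨d, rfl⟩ : ∃ d, c = d + Pi.single i 1 := ⟨c - Pi.single i 1, Eq.symm <|
    tsub_add_cancel_of_le fun j ↦ by
      rcases eq_or_ne j i with rfl | hj
      · rwa [Pi.single_eq_same]
      · rw [Pi.single_eq_of_ne hj]
        exact Nat.zero_le _⟩
  exact ⟨d, by simp [Finset.sum_add_distrib],
    by simp [Finset.sum_add_distrib, add_smul, Pi.single_apply]⟩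

/-- A nonzero `x - y ≥ 0` has positive pairing with some `α_i` in its support; as `y` is dominant,
`⟨x, α_i∨⟩` is then `1`, so `s_i x = x - α_i` is closer to `y` and as long as `x`. -/
lemma HasUnitPairings.inner_self_le_of_wle {x y : E} (hx : R.HasUnitPairings x)
    (hy : R.IsDominant y) (h : R.wle y x) : ⟪x, x⟫ ≤ ⟪y, y⟫ := by
  obtain ⟨c, hc⟩ := h
  induction hn : ∑ i, c i generalizing x c with
  | zero =>
    have hc0 : ∀ i, c i = 0 := fun i ↦ Finset.sum_eq_zero_iff.1 hn i (Finset.mem_univ i)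
    simp only [hc0, Nat.cast_zero, zero_smul, Finset.sum_const_zero] at hc
    rw [sub_eq_zero.1 hc]
  | succ n ih =>
    rcases eq_or_ne (x - y) 0 with h0 | hne
    · rw [sub_eq_zero.1 h0]
    obtain ⟨i, hi, hpos⟩ := exists_coeff_pos_of_sum_ne_zero (hc ▸ hne)
    have hpair : cpair x (R.simple i) = 1 := by
      have hxi : 0 < ⟪x, R.simple i⟫ := by
        rw [← hc, inner_sub_left] at hpos
        linarith [hy.inner_simple_nonneg i]
      have := (cpair_pos_iff (R.simple_ne_zero i) x).2 hxi
      rcases hx _ (R.simple_mem i) with h | h | h <;> linarith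
    obtain ⟨d, hdc, hd⟩ := exists_sum_sub_simple (R := R) hi
    rw [← inner_wrefl_wrefl (R.simple i)]
    refine ih (hx.wrefl (R.simple_mem i)) d ?_ (by omega)
    rw [_root_.wrefl, hpair, one_smul, sub_right_comm, hc, hd]

theorem HasUnitPairings.eq_of_wle {x y : E} (hx : R.HasUnitPairings x) (hy : R.IsDominant y)
    (h : R.wle y x) : y = x := by
  have hle := hx.inner_self_le_of_wle hy h
  obtain ⟨c, hc⟩ := h
  have hpos : 0 ≤ ⟪y, x - y⟫ := by
    rw [hc, inner_sum]
    exact Finset.sum_nonneg fun i _ ↦ by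
      rw [real_inner_smul_right]
      exact mul_nonneg (Nat.cast_nonneg _) (hy.inner_simple_nonneg i)
  have hself : ⟪x - y, x - y⟫ ≤ 0 := by
    rw [inner_sub_right] at hpos
    rw [real_inner_sub_sub_self]
    linarith [real_inner_comm x y]
  exact (sub_eq_zero.1 (real_inner_self_nonpos.1 hself)).symm

/-- Write `x = x⁺ - n` by the signs of the coefficients: as distinct simple roots have nonpositive
inner product, `0 ≤ (x, n) = (x⁺, n) - (n, n) ≤ -(n, n)`. -/
lemma coeff_nonneg {c : Fin ℓ → ℝ} (h : ∀ i, 0 ≤ ⟪∑ j, c j • R.simple j, R.simple i⟫)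
    (i : Fin ℓ) : 0 ≤ c i := by
  set n : E := ∑ j, (c j)⁻ • R.simple j with hn
  have hx : 0 ≤ ⟪∑ j, c j • R.simple j, n⟫ := by
    rw [hn, inner_sum]
    exact Finset.sum_nonneg fun j _ ↦ by
      rw [real_inner_smul_right]
      exact mul_nonneg (negPart_nonneg _) (h j)
  have hp : ⟪∑ j, (c j)⁺ • R.simple j, n⟫ ≤ 0 := by
    simp only [hn, sum_inner, inner_sum, real_inner_smul_left, real_inner_smul_right]
    refine Finset.sum_nonpos fun j _ ↦ Finset.sum_nonpos fun k _ ↦ ?_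
    rcases eq_or_ne j k with rfl | hjk
    · rcases le_total (c j) 0 with hj | hj
      · simp [posPart_eq_zero.2 hj]
      · simp [negPart_eq_zero.2 hj]
    · exact mul_nonpos_of_nonneg_of_nonpos (negPart_nonneg _) <|
        mul_nonpos_of_nonneg_of_nonpos (posPart_nonneg _) (inner_simple_nonpos hjk.symm)
  have hsplit : ∑ j, c j • R.simple j = ∑ j, (c j)⁺ • R.simple j - n := by
    simp only [hn, ← Finset.sum_sub_distrib, ← sub_smul, posPart_sub_negPart]
  have hzero : n = 0 := by
    rw [hsplit, inner_sub_left] at hx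
    exact real_inner_self_nonpos.1 (by linarith)
  exact negPart_eq_zero.1 (Fintype.linearIndependent_iff.1 R.simple_indep _ hzero i)

/-- The indices with zero coefficient span a union of components of the Dynkin diagram. -/
lemma coeff_pos {c : Fin ℓ → ℝ} (h : ∀ i, 0 ≤ ⟪∑ j, c j • R.simple j, R.simple i⟫)
    (hne : ∑ j, c j • R.simple j ≠ 0) (i : Fin ℓ) : 0 < c i := by
  classical
  have hnonneg := coeff_nonneg h
  refine (hnonneg i).lt_of_ne fun hi ↦ hne ?_
  have huniv := R.irred {j | c j = 0} ⟨i, by simp [hi]⟩ fun j hj k hk ↦ by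
    simp only [Finset.mem_filter, Finset.mem_univ, true_and] at hj hk
    have hterm : ∀ l ∈ Finset.univ, c l * ⟪R.simple l, R.simple j⟫ ≤ 0 := fun l _ ↦ by
      rcases eq_or_ne l j with rfl | hl
      · rw [hj, zero_mul]
      · exact mul_nonpos_of_nonneg_of_nonpos (hnonneg l) (inner_simple_nonpos hl)
    have hsum := h j
    simp only [sum_inner, real_inner_smul_left] at hsum
    have hk0 := (Finset.sum_eq_zero_iff_of_nonpos hterm).1
      ((Finset.sum_nonpos hterm).antisymm hsum) k (Finset.mem_univ k)
    rw [real_inner_comm]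
    exact (mul_eq_zero.1 hk0).resolve_left hk
  refine Finset.sum_eq_zero fun j hj ↦ ?_
  rw [(Finset.mem_filter.1 (huniv.ge hj)).2, zero_smul]

lemma IsDominant.sum_simple_wle {x : E} (hx : R.IsDominant x) (hQ : x ∈ R.rootLattice)
    (hne : x ≠ 0) : R.wle (∑ i, R.simple i) x := by
  obtain ⟨c, rfl⟩ := mem_rootLattice_iff.1 hQ
  have hpos : ∀ i, 0 < c i := fun i ↦ by
    exact_mod_cast coeff_pos hx.inner_simple_nonneg hne i
  refine ⟨fun i ↦ (c i - 1).toNat, ?_⟩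
  rw [← Finset.sum_sub_distrib]
  refine Finset.sum_congr rfl fun i _ ↦ ?_
  rw [← Int.cast_natCast, Int.toNat_of_nonneg (by linarith [hpos i])]
  push_cast
  module

lemma IsDominant.eq_zero_of_inner_nonpos {x w : E} (hx : R.IsDominant x)
    (hxs : x ∈ Submodule.span ℝ (Set.range R.simple)) (hw : R.IsDominant w)
    (hws : w ∈ Submodule.span ℝ (Set.range R.simple)) (hw0 : w ≠ 0) (h : ⟪x, w⟫ ≤ 0) :
    x = 0 := by
  obtain ⟨d, rfl⟩ := (Submodule.mem_span_range_iff_exists_fun ℝ).1 hws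
  have hd := coeff_pos hw.inner_simple_nonneg hw0
  have hterm : ∀ i ∈ Finset.univ, 0 ≤ d i * ⟪x, R.simple i⟫ := fun i _ ↦
    mul_nonneg (hd i).le (hx.inner_simple_nonneg i)
  simp only [inner_sum, real_inner_smul_right] at h
  refine eq_of_inner_simple_eq hxs (zero_mem _) fun i ↦ ?_
  rw [inner_zero_left]
  exact (mul_eq_zero.1 ((Finset.sum_eq_zero_iff_of_nonneg hterm).1
    (h.antisymm (Finset.sum_nonneg hterm)) i (Finset.mem_univ i))).resolve_left (hd i).ne'

lemma IsDominant.add_ne_zero {x y : E} (hx : R.IsDominant x)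
    (hxs : x ∈ Submodule.span ℝ (Set.range R.simple)) (hx0 : x ≠ 0) (hy : R.IsDominant y) :
    x + y ≠ 0 := fun h ↦ hx0 <| eq_of_inner_simple_eq hxs (zero_mem _) fun i ↦ by
  have hsum : ⟪x, R.simple i⟫ + ⟪y, R.simple i⟫ = 0 := by
    rw [← inner_add_left, h, inner_zero_left]
  rw [inner_zero_left]
  linarith [hx.inner_simple_nonneg i, hy.inner_simple_nonneg i]

/-! ### Low triples -/

lemma IsDominant.isMinuscule_of_abs_cpair_le {x : E} (hx : R.IsDominant x) (hne : x ≠ 0)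
    (hle : ∀ α ∈ R.roots, |cpair x α| ≤ 1) : R.IsMinuscule x := by
  refine ⟨hx, hne, fun α hα ↦ ?_⟩
  obtain ⟨n, hn⟩ := hx.1 α hα
  have hn1 : |n| ≤ 1 := by
    have := hle α hα
    rw [hn] at this
    exact_mod_cast this
  rw [hn]
  norm_cast
  grind

theorem LowTriple.symm {lam mu nu : E} (h : R.LowTriple lam mu nu) : R.LowTriple mu lam nu := by
  obtain ⟨hlam, hmu, hnu, hmin, hle⟩ := h
  refine ⟨hmu, hlam, hnu, fun mu' lam' hmu' hlam' hmule hlamle hsum ↦ ?_, add_comm lam mu ▸ hle⟩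
  exact (hmin lam' mu' hlam' hmu' hlamle hmule (add_comm mu' lam' ▸ hsum)).symm

theorem IsMinuscule.lowTriple_zero {lam mu : E} (hlam : R.IsMinuscule lam)
    (hs : lam ∈ Submodule.span ℝ (Set.range R.simple)) (hmu : R.IsDualOf mu lam) :
    R.LowTriple lam mu 0 := by
  obtain ⟨hdom, hne, hunit⟩ := hlam
  obtain ⟨hmudom, horbit⟩ := hmu
  have hmuunit : R.HasUnitPairings mu :=
    horbit.induction (fun α hα x hx ↦ hx.wrefl hα) (HasUnitPairings.neg hunit)
  have hQ : lam + mu ∈ R.rootLattice := by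
    rw [add_comm, ← sub_neg_eq_add]
    exact horbit.sub_mem_rootLattice hdom.1.neg
  refine ⟨hdom, hmudom, isDominant_zero, fun lam' mu' hlam' hmu' hlamle hmule _ ↦ ?_, ?_⟩
  · exact ⟨HasUnitPairings.eq_of_wle hunit hlam' hlamle, hmuunit.eq_of_wle hmu' hmule⟩
  · rw [zero_add]
    exact (hdom.add hmudom).sum_simple_wle hQ (hdom.add_ne_zero hs hne hmudom)

/-- The bound on `⟪lam + mu, w⟫` leaves `0` as the only dominant weight below
`lam + mu - ∑ i, α_i`. -/
theorem not_lowTriple {i : Fin ℓ} {w lam mu : E} (hw : R.IsFundamentalWeight i w)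
    (hs : lam + mu ∈ Submodule.span ℝ (Set.range R.simple)) (hQ : lam + mu ∉ R.rootLattice)
    (hle : 2 * ⟪lam + mu, w⟫ ≤ ⟪R.simple i, R.simple i⟫) (nu : E) : ¬ R.LowTriple lam mu nu := by
  rintro ⟨-, -, hnu, -, c, hc⟩
  set γ : E := ∑ j, (↑(c j + 1) : ℝ) • R.simple j with hγ
  have hγQ : γ ∈ R.rootLattice := sum_natCast_smul_mem_rootLattice _
  have hsum : lam + mu = nu + γ := by
    rw [sub_eq_iff_eq_add'.1 hc, add_assoc, ← Finset.sum_add_distrib]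
    simp only [hγ, Nat.cast_add, Nat.cast_one, add_smul, one_smul, add_comm]
  have hnus : nu ∈ Submodule.span ℝ (Set.range R.simple) := by
    rw [← sub_eq_iff_eq_add.2 hsum]
    exact sub_mem hs (mem_span_simple_of_mem_rootLattice hγQ)
  have hinner : ⟪nu, w⟫ ≤ 0 := by
    have hγw := hw.two_mul_inner_sum fun j ↦ (↑(c j + 1) : ℝ)
    rw [← hγ] at hγw
    rw [hsum, inner_add_left] at hle
    push_cast at hγw
    nlinarith [real_inner_self_nonneg (x := R.simple i), (c i).cast_nonneg (α := ℝ)]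
  rw [hsum, hnu.eq_zero_of_inner_nonpos hnus hw.isDominant hw.1 hw.ne_zero hinner, zero_add] at hQ
  exact hQ hγQ

end RootSystem

/-! ### Type D in Bourbaki coordinates -/

section TypeD

variable {m : ℕ}

/-- The Bourbaki realization of type D: `ε` is an orthogonal basis of vectors of square length `h`,
and `R.simple` is `ε₁ - ε₂, …, ε_{ℓ-1} - ε_ℓ, ε_{ℓ-1} + ε_ℓ` (with `ℓ = m + 2`). The scale `h` is
left free because the inner product is only determined by the root system up to a factor. -/
structure IsStandardBasis (R : RootSystemData (m + 2) E) (ε : Fin (m + 2) → E) (h : ℝ) :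
    Prop where
  inner_eq : ∀ i j, ⟪ε i, ε j⟫ = if i = j then h else 0
  simple_castSucc : ∀ k : Fin (m + 1), R.simple k.castSucc = ε k.castSucc - ε k.succ
  simple_last : R.simple (Fin.last (m + 1)) = ε (Fin.last m).castSucc + ε (Fin.last (m + 1))

/-- The basis `ε₁, …, ε_ℓ` of the Bourbaki realization of type D, obtained by solving for it in
terms of the simple roots, starting from `ε_ℓ = (α_ℓ - α_{ℓ-1}) / 2`. -/
def stdBasis (R : RootSystemData (m + 2) E) (k : Fin (m + 2)) : E :=
  Fin.reverseInduction (motive := fun _ ↦ E)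
    ((1 / 2 : ℝ) • (R.simple (Fin.last (m + 1)) - R.simple (Fin.last m).castSucc))
    (fun k ε ↦ R.simple k.castSucc + ε) k

lemma stdBasis_last (R : RootSystemData (m + 2) E) :
    R.stdBasis (Fin.last (m + 1)) =
      (1 / 2 : ℝ) • (R.simple (Fin.last (m + 1)) - R.simple (Fin.last m).castSucc) :=
  Fin.reverseInduction_last ..

lemma stdBasis_castSucc (R : RootSystemData (m + 2) E) (k : Fin (m + 1)) :
    R.stdBasis k.castSucc = R.simple k.castSucc + R.stdBasis k.succ :=
  Fin.reverseInduction_castSucc ..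

variable {R : RootSystemData (m + 2) E}

lemma IsTypeD.inner_self_simple (hD : R.IsTypeD) (i j : Fin (m + 2)) :
    ⟪R.simple i, R.simple i⟫ = ⟪R.simple j, R.simple j⟫ :=
  inner_self_simple_eq (fun i j ↦ by rw [hD, hD]; congr 1 <;> grind) i j

lemma IsTypeD.inner_simple (hD : R.IsTypeD) (i j : Fin (m + 2)) :
    ⟪R.simple j, R.simple i⟫ =
      ⟪R.simple 0, R.simple 0⟫ / 2 * cpair (R.simple j) (R.simple i) := by
  have hpair := cpair_mul_inner_self (R.simple_ne_zero i) (R.simple j)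
  rw [hD.inner_self_simple i 0] at hpair
  linarith

lemma IsTypeD.inner_simple_castSucc (hD : R.IsTypeD) (k l : Fin (m + 1)) :
    ⟪R.simple k.castSucc, R.simple l.castSucc⟫ =
      ⟪R.simple 0, R.simple 0⟫ / 2 *
        if k = l then 2 else if (k : ℕ) + 1 = l ∨ (l : ℕ) + 1 = k then -1 else 0 := by
  rw [hD.inner_simple, hD]
  simp only [Fin.ext_iff, Fin.val_castSucc]
  congr 1
  grind

lemma IsTypeD.inner_simple_last (hD : R.IsTypeD) (hm : 1 ≤ m) (k : Fin (m + 1)) :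
    ⟪R.simple k.castSucc, R.simple (Fin.last (m + 1))⟫ =
      ⟪R.simple 0, R.simple 0⟫ / 2 * if (k : ℕ) + 1 = m then -1 else 0 := by
  rw [hD.inner_simple, hD]
  simp only [Fin.ext_iff, Fin.val_castSucc, Fin.val_last]
  congr 1
  grind

lemma IsTypeD.inner_stdBasis_simple_castSucc (hD : R.IsTypeD) (hm : 1 ≤ m) (k : Fin (m + 2))
    (l : Fin (m + 1)) :
    ⟪R.stdBasis k, R.simple l.castSucc⟫ =
      ⟪R.simple 0, R.simple 0⟫ / 2 *
        ((if k = l.castSucc then 1 else 0) - if k = l.succ then 1 else 0) := by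
  induction k using Fin.reverseInduction with
  | last =>
    rw [stdBasis_last, real_inner_smul_left, inner_sub_left, real_inner_comm,
      hD.inner_simple_last hm, hD.inner_simple_castSucc]
    simp only [Fin.ext_iff, Fin.val_last, Fin.val_castSucc, Fin.val_succ]
    split_ifs <;> first | omega | ring
  | cast k ih =>
    rw [stdBasis_castSucc, inner_add_left, hD.inner_simple_castSucc, ih]
    simp only [Fin.ext_iff, Fin.val_castSucc, Fin.val_succ]
    split_ifs <;> first | omega | ring

lemma IsTypeD.inner_stdBasis_simple_last (hD : R.IsTypeD) (hm : 1 ≤ m) (k : Fin (m + 2)) :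
    ⟪R.stdBasis k, R.simple (Fin.last (m + 1))⟫ =
      ⟪R.simple 0, R.simple 0⟫ / 2 *
        ((if k = (Fin.last m).castSucc then 1 else 0) + if k = Fin.last (m + 1) then 1 else 0) := by
  induction k using Fin.reverseInduction with
  | last =>
    rw [stdBasis_last, real_inner_smul_left, inner_sub_left, hD.inner_self_simple _ 0,
      hD.inner_simple_last hm]
    simp only [Fin.ext_iff, Fin.val_last, Fin.val_castSucc]
    split_ifs <;> first | omega | ring
  | cast k ih =>
    rw [stdBasis_castSucc, inner_add_left, hD.inner_simple_last hm, ih]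
    simp only [Fin.ext_iff, Fin.val_last, Fin.val_castSucc, Fin.val_succ]
    split_ifs <;> first | omega | ring

theorem IsTypeD.isStandardBasis_stdBasis (hD : R.IsTypeD) (hm : 1 ≤ m) :
    R.IsStandardBasis R.stdBasis (⟪R.simple 0, R.simple 0⟫ / 2) where
  inner_eq i j := by
    induction j using Fin.reverseInduction with
    | last =>
      rw [stdBasis_last, real_inner_smul_right, inner_sub_right,
        hD.inner_stdBasis_simple_castSucc hm, hD.inner_stdBasis_simple_last hm, Fin.succ_last]
      split_ifs <;> ring
    | cast j ih =>
      rw [stdBasis_castSucc, inner_add_right, hD.inner_stdBasis_simple_castSucc hm, ih]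
      split_ifs <;> ring
  simple_castSucc k := by rw [stdBasis_castSucc, add_sub_cancel_right]
  simple_last := by
    rw [stdBasis_castSucc, Fin.succ_last, stdBasis_last]
    module

namespace IsStandardBasis

variable {ε : Fin (m + 2) → E} {h : ℝ} (hε : R.IsStandardBasis ε h)

include hε

lemma inner_sum_sum (x y : Fin (m + 2) → ℝ) :
    ⟪∑ k, x k • ε k, ∑ k, y k • ε k⟫ = h * ∑ k, x k * y k := by
  simp only [sum_inner, inner_sum, real_inner_smul_left, real_inner_smul_right, hε.inner_eq,
    mul_ite, mul_zero, Finset.sum_ite_eq', Finset.mem_univ, if_true, Finset.mul_sum]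
  exact Finset.sum_congr rfl fun k _ ↦ by ring

lemma inner_self_root {α : E} (hα : α ∈ R.roots) : ⟪α, α⟫ = 2 * h := by
  refine inner_self_root_eq (fun i ↦ ?_) hα
  induction i using Fin.lastCases with
  | last =>
    simp only [hε.simple_last, inner_add_left, inner_add_right, hε.inner_eq, Fin.ext_iff,
      Fin.val_castSucc, Fin.val_last, m.succ_ne_self, m.succ_ne_self.symm, if_true, if_false]
    ring
  | cast i =>
    simp only [hε.simple_castSucc, inner_sub_left, inner_sub_right, hε.inner_eq,
      i.castSucc_lt_succ.ne, i.castSucc_lt_succ.ne', if_true, if_false]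
    ring

lemma scale_pos : 0 < h := by
  have := real_inner_self_pos.2 (R.simple_ne_zero 0)
  rw [hε.inner_self_root (R.simple_mem 0)] at this
  linarith

lemma ne_zero (k : Fin (m + 2)) : ε k ≠ 0 := fun h0 ↦ by
  have := hε.inner_eq k k
  rw [if_pos rfl, h0, inner_zero_left] at this
  exact hε.scale_pos.ne this

lemma simple_mem_span (i : Fin (m + 2)) : R.simple i ∈ Submodule.span ℤ (Set.range ε) := by
  have hmem (k) : ε k ∈ Submodule.span ℤ (Set.range ε) := Submodule.subset_span ⟨k, rfl⟩
  induction i using Fin.lastCases with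
  | last => exact hε.simple_last ▸ add_mem (hmem _) (hmem _)
  | cast i => exact hε.simple_castSucc i ▸ sub_mem (hmem _) (hmem _)

lemma exists_intCast_sum_eq {α : E} (hα : α ∈ R.roots) :
    ∃ z : Fin (m + 2) → ℤ, α = ∑ k, (z k : ℝ) • ε k ∧ ∑ k, (z k : ℝ) ^ 2 = 2 := by
  have hle : R.rootLattice ≤ Submodule.span ℤ (Set.range ε) :=
    Submodule.span_le.2 (Set.range_subset_iff.2 hε.simple_mem_span)
  obtain ⟨z, rfl⟩ := (Submodule.mem_span_range_iff_exists_fun ℤ).1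
    (hle (mem_rootLattice_of_mem_roots hα))
  simp only [← Int.cast_smul_eq_zsmul ℝ] at hα ⊢
  refine ⟨z, rfl, ?_⟩
  have hnorm := hε.inner_self_root hα
  rw [hε.inner_sum_sum, mul_comm 2 h] at hnorm
  simpa only [sq] using mul_left_cancel₀ hε.scale_pos.ne' hnorm

lemma mem_span_simple (k : Fin (m + 2)) : ε k ∈ Submodule.span ℝ (Set.range R.simple) := by
  have hmem (i) : R.simple i ∈ Submodule.span ℝ (Set.range R.simple) :=
    Submodule.subset_span ⟨i, rfl⟩
  induction k using Fin.reverseInduction with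
  | last =>
    have : ε (Fin.last (m + 1)) =
        (1 / 2 : ℝ) • (R.simple (Fin.last (m + 1)) - R.simple (Fin.last m).castSucc) := by
      rw [hε.simple_last, hε.simple_castSucc, Fin.succ_last]
      module
    exact this ▸ Submodule.smul_mem _ _ (sub_mem (hmem _) (hmem _))
  | cast k ih =>
    rw [← sub_add_cancel (ε k.castSucc) (ε k.succ), ← hε.simple_castSucc]
    exact add_mem (hmem _) ih

lemma sum_mem_span_simple (x : Fin (m + 2) → ℝ) :
    ∑ k, x k • ε k ∈ Submodule.span ℝ (Set.range R.simple) :=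
  sum_mem fun k _ ↦ Submodule.smul_mem _ _ (hε.mem_span_simple k)

lemma exists_sum_eq {x : E} (hx : x ∈ Submodule.span ℝ (Set.range R.simple)) :
    ∃ a : Fin (m + 2) → ℝ, x = ∑ k, a k • ε k := by
  have hle : Submodule.span ℝ (Set.range R.simple) ≤ Submodule.span ℝ (Set.range ε) :=
    Submodule.span_le.2 <| Set.range_subset_iff.2 fun i ↦
      Submodule.span_le_restrictScalars ℤ ℝ _ (hε.simple_mem_span i)
  obtain ⟨a, ha⟩ := (Submodule.mem_span_range_iff_exists_fun ℝ).1 (hle hx)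
  exact ⟨a, ha.symm⟩

lemma sub_mem_roots {i j : Fin (m + 2)} (hij : i ≠ j) : ε i - ε j ∈ R.roots := by
  wlog hlt : i < j generalizing i j
  · rw [← neg_sub]
    exact neg_mem_roots (this hij.symm ((not_lt.1 hlt).lt_of_ne hij.symm))
  induction j using Fin.induction with
  | zero => exact absurd hlt (Fin.not_lt_zero i)
  | succ j ih =>
    have hj : ε j.castSucc - ε j.succ ∈ R.roots := hε.simple_castSucc j ▸ R.simple_mem _
    rcases (Fin.le_castSucc_iff.2 hlt).eq_or_lt with rfl | hlt
    · exact hj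
    have hrefl : wrefl (ε j.succ - ε j.castSucc) (ε j.castSucc + -ε i) = ε j.succ + -ε i :=
      wrefl_sub_add (by simp [hε.inner_eq, j.castSucc_lt_succ.ne'])
        (by simp only [hε.inner_eq, if_true]) (hε.ne_zero _)
        (by simp [inner_neg_right, hε.inner_eq, hlt.ne', hij.symm])
    have hroot := R.reflect_mem _ (neg_mem_roots hj) _ (neg_mem_roots (ih hlt.ne hlt))
    rw [neg_sub, neg_sub, sub_eq_add_neg (ε j.castSucc) (ε i), hrefl] at hroot
    simpa only [neg_add_rev, neg_neg, sub_eq_add_neg] using neg_mem_roots hroot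

lemma add_mem_roots {i j : Fin (m + 2)} (hij : i ≠ j) : ε i + ε j ∈ R.roots := by
  have move {a b c : Fin (m + 2)} (hac : a ≠ c) (hbc : b ≠ c) (hroot : ε a + ε c ∈ R.roots) :
      ε b + ε c ∈ R.roots := by
    rcases eq_or_ne b a with rfl | hba
    · exact hroot
    rw [← wrefl_sub_add (u := ε b) (v := ε a) (by rw [hε.inner_eq, if_neg hba])
      (by simp only [hε.inner_eq, if_true]) (hε.ne_zero a)
      (by rw [hε.inner_eq, hε.inner_eq, if_neg hac, if_neg hbc])]
    exact R.reflect_mem _ (hε.sub_mem_roots hba) _ hroot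
  wlog hi : i ≠ Fin.last (m + 1) generalizing i j
  · rw [add_comm (ε i)]
    exact this hij.symm fun hj ↦ hij ((not_not.1 hi).trans hj.symm)
  have hlast : ε i + ε (Fin.last (m + 1)) ∈ R.roots :=
    move (Fin.castSucc_lt_last _).ne hi (hε.simple_last ▸ R.simple_mem _)
  rw [add_comm (ε i)] at hlast ⊢
  exact move hi.symm hij.symm hlast

lemma inner_sum_basis (a : Fin (m + 2) → ℝ) (k : Fin (m + 2)) :
    ⟪∑ i, a i • ε i, ε k⟫ = h * a k := by
  simp only [sum_inner, real_inner_smul_left, hε.inner_eq, mul_ite, mul_zero,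
    Finset.sum_ite_eq', Finset.mem_univ, if_true, mul_comm h]

lemma cpair_sum_basis (a : Fin (m + 2) → ℝ) (k : Fin (m + 2)) :
    cpair (∑ i, a i • ε i) (ε k) = 2 * a k := by
  rw [cpair, hε.inner_sum_basis, hε.inner_eq, if_pos rfl, mul_left_comm,
    mul_div_cancel_left₀ _ hε.scale_pos.ne']

lemma cpair_root {α : E} (hα : α ∈ R.roots) (x : E) : cpair x α = ⟪x, α⟫ / h := by
  rw [cpair, hε.inner_self_root hα, mul_div_mul_left _ _ two_ne_zero]

/-- The reflections in `ε_i - ε_j` and `ε_i + ε_j` together change the signs of coordinates `i` and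
`j`. -/
theorem inWeylOrbit_piecewise_neg {S : Finset (Fin (m + 2))} (hS : Even S.card)
    (x : Fin (m + 2) → ℝ) :
    R.InWeylOrbit (∑ k, x k • ε k) (∑ k, S.piecewise (-x) x k • ε k) := by
  obtain ⟨n, hn⟩ := hS
  induction n generalizing S with
  | zero =>
    rw [Finset.card_eq_zero.1 hn, Finset.piecewise_empty]
    exact .refl _
  | succ n ih =>
    have hcard : S.card = n + n + 1 + 1 := by omega
    obtain ⟨i, T', hiT, rfl, hT'⟩ := Finset.card_eq_succ.1 hcard
    obtain ⟨j, T, hjT, rfl, hT⟩ := Finset.card_eq_succ.1 hT'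
    have hij : i ≠ j := fun h ↦ hiT (h ▸ Finset.mem_insert_self j T)
    have hi : i ∉ T := fun h ↦ hiT (Finset.mem_insert_of_mem h)
    have horbit := ((ih hT).wrefl (hε.sub_mem_roots hij)).wrefl (hε.add_mem_roots hij)
    rw [wrefl_add_wrefl_sub (by rw [hε.inner_eq, if_neg hij]) (by simp only [hε.inner_eq, if_true]),
      hε.cpair_sum_basis, hε.cpair_sum_basis, Finset.piecewise_eq_of_notMem _ _ _ hi,
      Finset.piecewise_eq_of_notMem _ _ _ hjT] at horbit
    convert horbit using 1
    have hcoord (k) : (insert i (insert j T)).piecewise (-x) x k = T.piecewise (-x) x k -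
        (if i = k then 2 * x i else 0) - (if j = k then 2 * x j else 0) := by
      have hji := hij.symm
      simp only [Finset.piecewise, Finset.mem_insert, Pi.neg_apply]
      grind
    simp only [hcoord, sub_smul, Finset.sum_sub_distrib, ite_smul, zero_smul, Finset.sum_ite_eq,
      Finset.mem_univ, if_true]

lemma isDualOf_self {x : E} (hx : R.IsDominant x)
    (hs : x ∈ Submodule.span ℝ (Set.range R.simple)) (hm : Even m) : R.IsDualOf x x := by
  obtain ⟨a, rfl⟩ := hε.exists_sum_eq hs
  have horbit := hε.inWeylOrbit_piecewise_neg (S := Finset.univ)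
    (by rw [Finset.card_univ, Fintype.card_fin]; exact hm.add even_two) (-a)
  refine ⟨hx, ?_⟩
  simpa only [Finset.piecewise_univ, neg_neg, Pi.neg_apply, neg_smul, Finset.sum_neg_distrib]
    using horbit

lemma isFundamentalWeight_sum {i : Fin (m + 2)} {a : Fin (m + 2) → ℝ}
    (hcast : ∀ k : Fin (m + 1), a k.castSucc - a k.succ = if i = k.castSucc then 1 else 0)
    (hlast : a (Fin.last m).castSucc + a (Fin.last (m + 1)) =
      if i = Fin.last (m + 1) then 1 else 0) :
    R.IsFundamentalWeight i (∑ k, a k • ε k) := by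
  refine ⟨hε.sum_mem_span_simple a, fun j ↦ ?_⟩
  rw [hε.cpair_root (R.simple_mem j), div_eq_iff hε.scale_pos.ne']
  induction j using Fin.lastCases with
  | last =>
    rw [hε.simple_last, inner_add_right, hε.inner_sum_basis, hε.inner_sum_basis, ← mul_add, hlast,
      mul_comm]
  | cast k =>
    rw [hε.simple_castSucc, inner_sub_right, hε.inner_sum_basis, hε.inner_sum_basis, ← mul_sub,
      hcast, mul_comm]

lemma isFundamentalWeight_last :
    R.IsFundamentalWeight (Fin.last (m + 1)) (∑ k, (1 / 2 : ℝ) • ε k) :=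
  hε.isFundamentalWeight_sum (fun k ↦ by rw [sub_self, if_neg (Fin.castSucc_lt_last k).ne'])
    (by rw [add_halves, if_pos rfl])

lemma isFundamentalWeight_castSucc_last :
    R.IsFundamentalWeight (Fin.last m).castSucc
      (∑ k, Function.update (fun _ ↦ 1 / 2 : Fin (m + 2) → ℝ) (Fin.last (m + 1)) (-1 / 2) k •
        ε k) := by
  refine hε.isFundamentalWeight_sum (fun k ↦ ?_) ?_
  · induction k using Fin.lastCases with
    | last => norm_num [Fin.ext_iff]
    | cast k =>
      have hsucc : k.castSucc.succ ≠ Fin.last (m + 1) := by simp [Fin.ext_iff, k.2.ne]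
      rw [Function.update_of_ne (Fin.castSucc_lt_last _).ne, Function.update_of_ne hsucc, sub_self,
        if_neg (by simp [Fin.ext_iff, k.2.ne'])]
  · norm_num [Fin.ext_iff]

lemma isFundamentalWeight_zero (hm : 1 ≤ m) :
    R.IsFundamentalWeight 0 (∑ k, (Pi.single 0 1 : Fin (m + 2) → ℝ) k • ε k) := by
  have hlast : (Fin.last m).castSucc ≠ 0 := by
    simpa [Fin.ext_iff] using (Nat.one_le_iff_ne_zero.1 hm)
  refine hε.isFundamentalWeight_sum (fun k ↦ ?_) ?_
  · simp [Pi.single_apply, eq_comm]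
  · simp [hlast, Fin.ext_iff]

lemma abs_cpair_sum_le_one {a : Fin (m + 2) → ℝ} (ha : ∀ k, |a k| ≤ 1 / 2) {α : E}
    (hα : α ∈ R.roots) : |cpair (∑ k, a k • ε k) α| ≤ 1 := by
  obtain ⟨z, hz, hsq⟩ := hε.exists_intCast_sum_eq hα
  rw [hε.cpair_root hα, hz, hε.inner_sum_sum, mul_div_cancel_left₀ _ hε.scale_pos.ne']
  have hterm (k) : |a k * z k| ≤ 1 / 2 * (z k : ℝ) ^ 2 := by
    rw [abs_mul]
    have : |(z k : ℝ)| ≤ (z k : ℝ) ^ 2 := by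
      rw [← Int.cast_abs, Int.abs_eq_natAbs]
      exact_mod_cast Int.natAbs_le_self_sq (z k)
    exact mul_le_mul (ha k) this (abs_nonneg _) (by norm_num)
  calc |∑ k, a k * z k| ≤ ∑ k, |a k * z k| := Finset.abs_sum_le_sum_abs _ _
    _ ≤ ∑ k, 1 / 2 * (z k : ℝ) ^ 2 := Finset.sum_le_sum fun k _ ↦ hterm k
    _ = 1 := by rw [← Finset.mul_sum, hsq]; norm_num

lemma abs_cpair_basis_le_one (k : Fin (m + 2)) {α : E} (hα : α ∈ R.roots) :
    |cpair (ε k) α| ≤ 1 := by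
  obtain ⟨z, hz, hsq⟩ := hε.exists_intCast_sum_eq hα
  rw [hε.cpair_root hα, hz, real_inner_comm, hε.inner_sum_basis,
    mul_div_cancel_left₀ _ hε.scale_pos.ne']
  have hle : (z k : ℝ) ^ 2 ≤ 2 :=
    hsq ▸ Finset.single_le_sum (fun k _ ↦ sq_nonneg (z k : ℝ)) (Finset.mem_univ k)
  have : z k ^ 2 ≤ 2 := by exact_mod_cast hle
  have : |z k| ≤ 1 := abs_le.2 ⟨by nlinarith, by nlinarith⟩
  exact_mod_cast this

/-- Pairing with `ω_ℓ` shows that the coordinate sum is twice the coefficient of `α_ℓ`. -/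
lemma exists_sum_eq_two_mul {a : Fin (m + 2) → ℝ} (ha : ∑ k, a k • ε k ∈ R.rootLattice) :
    ∃ n : ℤ, ∑ k, a k = 2 * n := by
  obtain ⟨c, hc⟩ := mem_rootLattice_iff.1 ha
  have hw := hε.isFundamentalWeight_last.two_mul_inner_sum fun i ↦ (c i : ℝ)
  rw [← hc, hε.inner_sum_sum, ← Finset.sum_mul, hε.inner_self_root (R.simple_mem _)] at hw
  refine ⟨c (Fin.last _), mul_left_cancel₀ hε.scale_pos.ne' ?_⟩
  linarith

lemma not_lowTriple_of_odd (hm : 1 ≤ m) {a b : Fin (m + 2) → ℝ} (h0 : a 0 + b 0 ≤ 1) {n : ℤ}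
    (hn : Odd n) (hsum : ∑ k, (a k + b k) = n) (nu : E) :
    ¬ R.LowTriple (∑ k, a k • ε k) (∑ k, b k • ε k) nu := by
  have hadd : ∑ k, a k • ε k + ∑ k, b k • ε k = ∑ k, (a k + b k) • ε k := by
    simp only [add_smul, Finset.sum_add_distrib]
  refine not_lowTriple (hε.isFundamentalWeight_zero hm) ?_ ?_ ?_ nu <;> rw [hadd]
  · exact hε.sum_mem_span_simple _
  · intro hQ
    obtain ⟨k, hk⟩ := hε.exists_sum_eq_two_mul hQ
    have : n = 2 * k := by exact_mod_cast hsum.symm.trans hk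
    exact Int.not_even_iff_odd.2 hn (this ▸ even_two_mul k)
  · rw [hε.inner_sum_sum, hε.inner_self_root (R.simple_mem 0)]
    simp only [Pi.single_apply, mul_ite, mul_one, mul_zero, Finset.sum_ite_eq', Finset.mem_univ,
      if_true]
    nlinarith [hε.scale_pos]

lemma isMinuscule_of_abs_coord_le {i : Fin (m + 2)} {a : Fin (m + 2) → ℝ}
    (hw : R.IsFundamentalWeight i (∑ k, a k • ε k)) (ha : ∀ k, |a k| ≤ 1 / 2) :
    R.IsMinuscule (∑ k, a k • ε k) :=
  hw.isDominant.isMinuscule_of_abs_cpair_le hw.ne_zero fun _ ↦ hε.abs_cpair_sum_le_one ha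

lemma isMinuscule_last {w : E} (hw : R.IsFundamentalWeight (Fin.last (m + 1)) w) :
    R.IsMinuscule w := by
  rw [hw.unique hε.isFundamentalWeight_last]
  exact hε.isMinuscule_of_abs_coord_le hε.isFundamentalWeight_last fun _ ↦
    (abs_of_pos one_half_pos).le

lemma isMinuscule_castSucc_last {w : E} (hw : R.IsFundamentalWeight (Fin.last m).castSucc w) :
    R.IsMinuscule w := by
  rw [hw.unique hε.isFundamentalWeight_castSucc_last]
  refine hε.isMinuscule_of_abs_coord_le hε.isFundamentalWeight_castSucc_last fun k ↦ ?_
  rcases eq_or_ne k (Fin.last (m + 1)) with rfl | hk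
  · rw [Function.update_self, neg_div, abs_neg, abs_of_pos one_half_pos]
  · rw [Function.update_of_ne hk, abs_of_pos one_half_pos]

lemma eq_basis_zero (hm : 1 ≤ m) {w : E} (hw : R.IsFundamentalWeight 0 w) : w = ε 0 := by
  rw [hw.unique (hε.isFundamentalWeight_zero hm)]
  simp [Pi.single_apply]

lemma isMinuscule_zero (hm : 1 ≤ m) {w : E} (hw : R.IsFundamentalWeight 0 w) :
    R.IsMinuscule w :=
  hw.isDominant.isMinuscule_of_abs_cpair_le hw.ne_zero fun _ hα ↦
    hε.eq_basis_zero hm hw ▸ hε.abs_cpair_basis_le_one 0 hα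

lemma isDualOf_zero (hm : 1 ≤ m) {w : E} (hw : R.IsFundamentalWeight 0 w) : R.IsDualOf w w := by
  refine ⟨hw.isDominant, ?_⟩
  have horbit := hε.inWeylOrbit_piecewise_neg (S := {0, Fin.last (m + 1)})
    (by rw [Finset.card_pair (Fin.last_pos).ne]; exact even_two) (-Pi.single 0 1)
  rw [hw.unique (hε.isFundamentalWeight_zero hm)]
  convert horbit using 1
  · simp only [Pi.neg_apply, neg_smul, Finset.sum_neg_distrib]
  · refine Finset.sum_congr rfl fun k _ ↦ ?_
    congr 1
    by_cases hk : k = 0 <;> simp [Finset.piecewise, hk]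

lemma isDualOf_castSucc_last_last (hm : Odd m) {v w : E}
    (hv : R.IsFundamentalWeight (Fin.last m).castSucc v)
    (hw : R.IsFundamentalWeight (Fin.last (m + 1)) w) : R.IsDualOf v w := by
  refine ⟨hv.isDominant, ?_⟩
  have horbit := hε.inWeylOrbit_piecewise_neg (S := Finset.univ.erase (Fin.last (m + 1)))
    (by simpa using hm.add_one) fun _ ↦ -(1 / 2)
  rw [hv.unique hε.isFundamentalWeight_castSucc_last, hw.unique hε.isFundamentalWeight_last]
  convert horbit using 1
  · simp only [neg_smul, Finset.sum_neg_distrib]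
  · refine Finset.sum_congr rfl fun k _ ↦ ?_
    congr 1
    by_cases hk : k = Fin.last (m + 1) <;>
      simp [Finset.piecewise, hk, neg_div]

lemma not_lowTriple_castSucc_last_last (hm : 1 ≤ m) (heven : Even m) {v w : E}
    (hv : R.IsFundamentalWeight (Fin.last m).castSucc v)
    (hw : R.IsFundamentalWeight (Fin.last (m + 1)) w) (nu : E) : ¬ R.LowTriple v w nu := by
  rw [hv.unique hε.isFundamentalWeight_castSucc_last, hw.unique hε.isFundamentalWeight_last]
  refine hε.not_lowTriple_of_odd hm ?_ (n := m + 1) (by exact_mod_cast heven.add_one) ?_ nu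
  · rw [Function.update_of_ne (Fin.last_pos).ne]
    norm_num
  · rw [Finset.sum_add_distrib, Finset.sum_update_of_mem (Finset.mem_univ _)]
    have hcard : (Finset.univ \ {Fin.last (m + 1)}).card = m + 1 := by simp [Finset.card_sdiff]
    simp only [Finset.sum_const, hcard, Finset.card_univ, Fintype.card_fin, nsmul_eq_mul]
    push_cast
    ring

lemma not_lowTriple_last_last (hodd : Odd m) {w : E}
    (hw : R.IsFundamentalWeight (Fin.last (m + 1)) w) (nu : E) : ¬ R.LowTriple w w nu := by
  rw [hw.unique hε.isFundamentalWeight_last]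
  refine hε.not_lowTriple_of_odd hodd.pos (by norm_num) (n := m + 2)
    (by exact_mod_cast hodd.add_even even_two) ?_ nu
  simp only [add_halves]
  simp

end IsStandardBasis

end TypeD

end RootSystemData

/-- In type D_ℓ: for ℓ even, `(ω_ℓ,ω_ℓ,0)`, `(ω_{ℓ-1},ω_{ℓ-1},0)` and
`(ω₁,ω₁,0)` are low triples while `(ω_{ℓ-1},ω_ℓ,ν)` never is, and
`-w₀ω_ℓ = ω_ℓ`; for ℓ odd, `(ω_{ℓ-1},ω_ℓ,0)` and `(ω₁,ω₁,0)` are low triples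
while `(ω_ℓ,ω_ℓ,ν)` never is, and `-w₀ω_ℓ = ω_{ℓ-1}`. -/
theorem statement8 (R : RootSystemData ℓ E) (hℓ : 4 ≤ ℓ) (hD : R.IsTypeD)
    (ω : Fin ℓ → E)
    (hω : ∀ i j, cpair (ω i) (R.simple j) = if i = j then 1 else 0)
    (hspan : ∀ i, ∃ c : Fin ℓ → ℝ, ω i = ∑ j, c j • R.simple j) :
    (Even ℓ →
      R.LowTriple (ω ⟨ℓ - 1, by omega⟩) (ω ⟨ℓ - 1, by omega⟩) 0 ∧
      R.LowTriple (ω ⟨ℓ - 2, by omega⟩) (ω ⟨ℓ - 2, by omega⟩) 0 ∧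
      R.LowTriple (ω ⟨0, by omega⟩) (ω ⟨0, by omega⟩) 0 ∧
      (∀ ν : E, ¬ R.LowTriple (ω ⟨ℓ - 2, by omega⟩) (ω ⟨ℓ - 1, by omega⟩) ν) ∧
      R.IsDualOf (ω ⟨ℓ - 1, by omega⟩) (ω ⟨ℓ - 1, by omega⟩)) ∧
    (¬ Even ℓ →
      R.LowTriple (ω ⟨ℓ - 2, by omega⟩) (ω ⟨ℓ - 1, by omega⟩) 0 ∧
      R.LowTriple (ω ⟨0, by omega⟩) (ω ⟨0, by omega⟩) 0 ∧
      (∀ ν : E, ¬ R.LowTriple (ω ⟨ℓ - 1, by omega⟩) (ω ⟨ℓ - 1, by omega⟩) ν) ∧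
      R.IsDualOf (ω ⟨ℓ - 2, by omega⟩) (ω ⟨ℓ - 1, by omega⟩)) := by
  obtain ⟨m, rfl⟩ := Nat.exists_eq_add_of_le' (by omega : 2 ≤ ℓ)
  have hm : 1 ≤ m := by omega
  have hε := hD.isStandardBasis_stdBasis hm
  have hf (i) : R.IsFundamentalWeight i (ω i) := ⟨by
    obtain ⟨c, hc⟩ := hspan i
    exact (Submodule.mem_span_range_iff_exists_fun ℝ).2 ⟨c, hc.symm⟩, hω i⟩
  have hfirst :=
    (hε.isMinuscule_zero hm (hf 0)).lowTriple_zero (hf 0).1 (hε.isDualOf_zero hm (hf 0))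
  have hlast := hf (Fin.last (m + 1))
  have hprev := hf (Fin.last m).castSucc
  simp only [Nat.even_add, even_two, iff_true, Nat.not_even_iff_odd]
  refine ⟨fun heven ↦ ?_, fun hodd ↦ ?_⟩
  · have hdual {i} : R.IsDualOf (ω i) (ω i) := hε.isDualOf_self (hf i).isDominant (hf i).1 heven
    exact ⟨(hε.isMinuscule_last hlast).lowTriple_zero hlast.1 hdual,
      (hε.isMinuscule_castSucc_last hprev).lowTriple_zero hprev.1 hdual, hfirst,
      hε.not_lowTriple_castSucc_last_last hm heven hprev hlast, hdual⟩
  · have hdual := hε.isDualOf_castSucc_last_last hodd hprev hlast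
    exact ⟨((hε.isMinuscule_last hlast).lowTriple_zero hlast.1 hdual).symm, hfirst,
      hε.not_lowTriple_last_last hodd hlast, hdual⟩
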